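/- arXiv:2408.00422 — 2 statements merged into one kernel-verified Lean document; each statement's English description precedes it below -/
import Mathlib

section
/- Let W_n be the step graphons of symmetric nonnegative n×n matrices and let W ∈ L¹((0,1)²) be nonnegative and symmetric, with sup_n ‖W_n‖_{L¹} < ∞ and ‖W_n − W‖_□ → 0. On the set Y of Young measures ν with ν_x([−1,1]) = 1 for a.e. x, define F_n(ν) = ∫₀¹∫₀¹ W_n(x,y)|u(x)−u(y)|² dx dy if ν = δ_u for some n-step function u : (0,1) → [−1,1], and F_n(ν) = +∞ otherwise. Then F_n Γ-converges on Y, with respect to narrow convergence of Young measures, to the graphon Dirichlet energy D^W(ν) = ∫₀¹∫₀¹ W(x,y) ∫_ℝ∫_ℝ |λ−μ|² dν_x(λ) dν_y(μ) dx dy. -/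
open MeasureTheory Filter
open scoped Classical

noncomputable section

/-- The open unit interval `(0,1)` as a subset of `ℝ`. -/
def I01 : Set ℝ := Set.Ioo 0 1

/-- A Young measure on `(0,1)`: a measurable family of Borel probability measures on `ℝ`. -/
def IsYoungMeasure (ν : ℝ → Measure ℝ) : Prop :=
  Measurable ν ∧ ∀ x, IsProbabilityMeasure (ν x)

/-- The Young measure associated with a measurable function `u`: `(δ_u)_x = δ_{u(x)}`. -/
def deltaYM (u : ℝ → ℝ) : ℝ → Measure ℝ := fun x => Measure.dirac (u x)

/-- The type of Young measures `ν` with `ν_x([−1,1]) = 1` for a.e. `x ∈ (0,1)`. -/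
def YMb := {ν : ℝ → Measure ℝ // IsYoungMeasure ν ∧
  ∀ᵐ x ∂(volume.restrict I01), ν x (Set.Icc (-1 : ℝ) 1) = 1}

/-- Narrow convergence of Young measures. -/
def NarrowConv (ν : ℕ → ℝ → Measure ℝ) (μ : ℝ → Measure ℝ) : Prop :=
  ∀ f : ℝ → ℝ, Continuous f → (∃ C, ∀ s, |f s| ≤ C) →
    ∀ g : ℝ → ℝ, IntegrableOn g I01 →
      Tendsto (fun n => ∫ x in I01, g x * ∫ t, f t ∂(ν n x)) atTop
        (nhds (∫ x in I01, g x * ∫ t, f t ∂(μ x)))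

/-- The cut norm of a kernel `V ∈ L¹((0,1)²)`. -/
def cutNorm (V : ℝ → ℝ → ℝ) : ℝ :=
  sSup {r : ℝ | ∃ f g : ℝ → ℝ, Measurable f ∧ Measurable g ∧
    (∀ x, f x ∈ Set.Icc (-1 : ℝ) 1) ∧ (∀ x, g x ∈ Set.Icc (-1 : ℝ) 1) ∧
    r = |∫ x in I01, ∫ y in I01, V x y * f x * g y|}

/-- The index `i` with `x ∈ ((i−1)/n, i/n]`, shifted to start at `0`. -/
def stepIdx (n : ℕ) (x : ℝ) : ℕ := ⌈(n : ℝ) * x⌉₊ - 1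

/-- The step graphon of an `n × n` matrix `A`. -/
def stepGraphon (n : ℕ) (A : Fin n → Fin n → ℝ) (x y : ℝ) : ℝ :=
  if hx : stepIdx n x < n then
    if hy : stepIdx n y < n then A ⟨stepIdx n x, hx⟩ ⟨stepIdx n y, hy⟩ else 0
  else 0

/-- An `n`-step function: constant on each interval `I_i = ((i−1)/n, i/n]`. -/
def IsStepFun (n : ℕ) (u : ℝ → ℝ) : Prop :=
  ∀ i : Fin n, ∀ x ∈ Set.Ioc ((i : ℝ) / n) (((i : ℝ) + 1) / n),
    ∀ y ∈ Set.Ioc ((i : ℝ) / n) (((i : ℝ) + 1) / n), u x = u y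

/-- The graphon Dirichlet energy of a Young measure. -/
def graphonDirichlet (V : ℝ → ℝ → ℝ) (ν : ℝ → Measure ℝ) : ℝ :=
  ∫ x in I01, ∫ y in I01, V x y * ∫ t, (∫ s, |s - t| ^ 2 ∂(ν x)) ∂(ν y)

/-- The graph Dirichlet functional on Young measures: equal to the graph Dirichlet energy of
`u` if `ν = δ_u` for some `n`-step function `u : (0,1) → [−1,1]`, and `+∞` otherwise. -/
def graphDirichletFn (n : ℕ) (Wn : ℝ → ℝ → ℝ) (ν : ℝ → Measure ℝ) : EReal :=
  if h : ∃ u : ℝ → ℝ, IsStepFun n u ∧ Measurable u ∧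
      (∀ x, u x ∈ Set.Icc (-1 : ℝ) 1) ∧ ν = deltaYM u then
    ((∫ x in I01, ∫ y in I01, Wn x y * |h.choose x - h.choose y| ^ 2 : ℝ) : EReal)
  else ⊤

/-- Γ-convergence of functionals with values in `ℝ ∪ {±∞}`. -/
def GammaConv {X : Type*} (conv : (ℕ → X) → X → Prop)
    (F : ℕ → X → EReal) (Flim : X → EReal) : Prop :=
  (∀ (xs : ℕ → X) (x : X), conv xs x →
      Flim x ≤ Filter.liminf (fun n => F n (xs n)) Filter.atTop) ∧
  (∀ x : X, ∃ xs : ℕ → X, conv xs x ∧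
      Filter.limsup (fun n => F n (xs n)) Filter.atTop ≤ Flim x)

/-!
With `B_V(p, q) = ∫∫ V(x, y) p(x) q(y)` and `m_k` the `k`-th moment of `ν`, expanding the square
gives `D^V(ν) = B_V(m₂, 1) + B_V(1, m₂) - 2 B_V(m₁, m₁)`. Since moments take values in `[-1, 1]`,
`|D^{W_n}(ν) - D^W(ν)| ≤ 4 ‖W_n - W‖_□` uniformly in `ν`. Moreover `B_W` is jointly weak-*
continuous on the unit ball of `L^∞`, so `D^W` is narrowly continuous. Hence
`D^{W_n}(ν_n) → D^W(ν)` whenever `ν_n → ν`, and as `F_n ≥ D^{W_n}`, with equality on step functions,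
it remains to approximate `ν` narrowly by `n`-step functions with values in `[-1, 1]`.

For this, map `[-1, 1]` continuously into `ℓ²` by some `φ` such that `t ↦ ⟪a, φ t⟫`, `a ∈ ℓ²`, are
dense in `C([-1, 1])`, and let `m(x) = ∫ φ dν_x`. On the successive cells of length `1 / n` choose
the values `t` so that the new error `∫_cell (φ t - m)` has nonpositive inner product with the
accumulated one. Errors then add up at most in quadrature, and the integral of `φ ∘ u_n - m` over
any initial segment is `O(1 / √n)`.
-/

open scoped Topology RealInnerProductSpace
open ProbabilityTheory

instance isFiniteMeasure_restrict_I01 : IsFiniteMeasure (volume.restrict I01) :=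
  inferInstanceAs (IsFiniteMeasure (volume.restrict (Set.Ioo 0 1)))

section WeakStar

variable {α ι : Type*} [MeasurableSpace α] {μ : Measure α} {l : Filter ι}

/-- Weak-* convergence of `p i` to `p₀` along `l`, in `L^∞(μ)` seen as the dual of `L¹(μ)`. -/
def TendstoWeakStar (μ : Measure α) (l : Filter ι) (p : ι → α → ℝ) (p₀ : α → ℝ) : Prop :=
  ∀ g : α → ℝ, Integrable g μ →
    Tendsto (fun i => ∫ x, g x * p i x ∂μ) l (𝓝 (∫ x, g x * p₀ x ∂μ))

lemma TendstoWeakStar.congr_ae {p q : ι → α → ℝ} {p₀ q₀ : α → ℝ}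
    (h : TendstoWeakStar μ l p p₀) (hpq : ∀ i, p i =ᵐ[μ] q i) (hpq₀ : p₀ =ᵐ[μ] q₀) :
    TendstoWeakStar μ l q q₀ := by
  have integral_congr (g : α → ℝ) {r s : α → ℝ} (hrs : r =ᵐ[μ] s) :
      ∫ x, g x * r x ∂μ = ∫ x, g x * s x ∂μ :=
    integral_congr_ae (hrs.mono fun x hx => by simp only [hx])
  intro g hg
  simpa only [integral_congr g (hpq _), integral_congr g hpq₀] using h g hg

lemma tendstoWeakStar_const (p : α → ℝ) : TendstoWeakStar μ l (fun _ => p) p :=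
  fun _ _ => tendsto_const_nhds

lemma abs_integral_mul_le {g p : α → ℝ} {C : ℝ} (hg : Integrable g μ) (hpC : ∀ x, ‖p x‖ ≤ C) :
    |∫ x, g x * p x ∂μ| ≤ C * ∫ x, ‖g x‖ ∂μ := by
  rw [← integral_const_mul]
  refine norm_integral_le_of_norm_le (f := fun x => g x * p x) (hg.norm.const_mul C)
    (ae_of_all _ fun x => ?_)
  rw [norm_mul, mul_comm]
  gcongr
  exact hpC x

lemma lipschitzWith_integral_mul {p : α → ℝ} {C : ℝ} (hp : AEStronglyMeasurable p μ)
    (hpC : ∀ x, ‖p x‖ ≤ C) :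
    LipschitzWith C.toNNReal fun g : α →₁[μ] ℝ => ∫ x, g x * p x ∂μ := by
  refine LipschitzWith.of_dist_le' fun f g => ?_
  have integrable_mul (g : α →₁[μ] ℝ) : Integrable (fun x => g x * p x) μ :=
    (L1.integrable_coeFn g).mul_bdd hp (ae_of_all _ hpC)
  have norm_sub : ‖f - g‖ = ∫ x, ‖f x - g x‖ ∂μ := by
    rw [L1.norm_eq_integral_norm]
    exact integral_congr_ae ((Lp.coeFn_sub f g).mono fun x hx => by simp only [hx, Pi.sub_apply])
  rw [Real.dist_eq, ← integral_sub (integrable_mul f) (integrable_mul g), dist_eq_norm, norm_sub]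
  simpa only [← sub_mul, Pi.sub_apply] using
    abs_integral_mul_le ((L1.integrable_coeFn f).sub (L1.integrable_coeFn g)) hpC

variable {p : ι → α → ℝ} {p₀ : α → ℝ} {C : ℝ}

lemma tendstoWeakStar_of_tendsto_setIntegral
    (hp : ∀ i, AEStronglyMeasurable (p i) μ) (hp₀ : AEStronglyMeasurable p₀ μ)
    (hpC : ∀ i x, ‖p i x‖ ≤ C) (hp₀C : ∀ x, ‖p₀ x‖ ≤ C)
    (hset : ∀ s, MeasurableSet s →
      Tendsto (fun i => ∫ x in s, p i x ∂μ) l (𝓝 (∫ x in s, p₀ x ∂μ))) :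
    TendstoWeakStar μ l p p₀ := by
  have integrable_mul {g q : α → ℝ} (hg : Integrable g μ) (hq : AEStronglyMeasurable q μ)
      (hqC : ∀ x, ‖q x‖ ≤ C) : Integrable (fun x => g x * q x) μ :=
    hg.mul_bdd hq (ae_of_all _ hqC)
  intro g hg
  refine Integrable.induction (fun g => Tendsto (fun i => ∫ x, g x * p i x ∂μ) l
    (𝓝 (∫ x, g x * p₀ x ∂μ))) (fun c s hs _ => ?_) (fun f g _ hf hg ihf ihg => ?_) ?_
    (fun f g hfg _ ihf => ?_) hg
  · have integral_indicator_mul (q : α → ℝ) :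
        ∫ x, s.indicator (fun _ => c) x * q x ∂μ = c * ∫ x in s, q x ∂μ := by
      simp only [← Set.indicator_mul_left, integral_indicator hs, integral_const_mul]
    simpa only [integral_indicator_mul] using (hset s hs).const_mul c
  · simpa only [Pi.add_apply, add_mul,
      integral_add (integrable_mul hf (hp _) (hpC _)) (integrable_mul hg (hp _) (hpC _)),
      integral_add (integrable_mul hf hp₀ hp₀C) (integrable_mul hg hp₀ hp₀C)] using ihf.add ihg
  · exact Equicontinuous.isClosed_setOfPred_tendsto
      (LipschitzWith.uniformEquicontinuous _ C.toNNReal fun i =>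
        lipschitzWith_integral_mul (hp i) (hpC i)).equicontinuous
      (lipschitzWith_integral_mul hp₀ hp₀C).continuous
  · have integral_congr (q : α → ℝ) : ∫ x, f x * q x ∂μ = ∫ x, g x * q x ∂μ :=
      integral_congr_ae (hfg.mono fun x hx => by simp only [hx])
    simpa only [integral_congr] using ihf

lemma tendsto_setIntegral_of_isPiSystem [IsFiniteMeasure μ] {S : Set (Set α)}
    (hS : ‹MeasurableSpace α› = MeasurableSpace.generateFrom S) (hπ : IsPiSystem S)
    (hp : ∀ i, AEStronglyMeasurable (p i) μ) (hp₀ : AEStronglyMeasurable p₀ μ)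
    (hpC : ∀ i x, ‖p i x‖ ≤ C) (hp₀C : ∀ x, ‖p₀ x‖ ≤ C)
    (huniv : Tendsto (fun i => ∫ x, p i x ∂μ) l (𝓝 (∫ x, p₀ x ∂μ)))
    (hset : ∀ s ∈ S, Tendsto (fun i => ∫ x in s, p i x ∂μ) l (𝓝 (∫ x in s, p₀ x ∂μ)))
    {s : Set α} (hs : MeasurableSet s) :
    Tendsto (fun i => ∫ x in s, p i x ∂μ) l (𝓝 (∫ x in s, p₀ x ∂μ)) := by
  have hpi (i : ι) : Integrable (p i) μ := .of_bound (hp i) C (ae_of_all _ (hpC i))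
  have hp₀i : Integrable p₀ μ := .of_bound hp₀ C (ae_of_all _ hp₀C)
  induction s, hs using MeasurableSpace.induction_on_inter hS hπ with
  | empty => simpa only [setIntegral_empty] using tendsto_const_nhds
  | basic s hs => exact hset s hs
  | compl s hs ih =>
    simpa only [setIntegral_compl hs (hpi _), setIntegral_compl hs hp₀i] using huniv.sub ih
  | iUnion f hdisj hf ih =>
    simp only [integral_iUnion hf hdisj (hpi _).integrableOn,
      integral_iUnion hf hdisj hp₀i.integrableOn]
    have hsum : Summable fun k => C * μ.real (f k) := by
      refine (ENNReal.summable_toReal ?_).mul_left C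
      exact measure_iUnion hdisj hf ▸ measure_ne_top μ _
    exact tendsto_tsum_of_dominated_convergence hsum ih (Eventually.of_forall fun i k =>
      norm_setIntegral_le_of_norm_le_const (measure_lt_top _ _) fun x _ => hpC i x)

end WeakStar

lemma setIntegral_Iic_restrict_I01 {E : Type*} [NormedAddCommGroup E] [NormedSpace ℝ E]
    (h : ℝ → E) {a : ℝ} (ha : 0 ≤ a) :
    ∫ x in Set.Iic a, h x ∂(volume.restrict I01) = ∫ x in (0 : ℝ)..min 1 a, h x := by
  rw [intervalIntegral.integral_of_le (le_min zero_le_one ha), I01,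
    Measure.restrict_congr_set Ioo_ae_eq_Ioc, Measure.restrict_restrict measurableSet_Iic,
    Set.inter_comm, Set.Ioc_inter_Iic]

lemma tendstoWeakStar_I01_of_tendsto_intervalIntegral {ι : Type*} {l : Filter ι}
    {p : ι → ℝ → ℝ} {p₀ : ℝ → ℝ} {C : ℝ} (hp : ∀ i, Measurable (p i)) (hp₀ : Measurable p₀)
    (hpC : ∀ i x, ‖p i x‖ ≤ C) (hp₀C : ∀ x, ‖p₀ x‖ ≤ C)
    (hseg : ∀ q ∈ Set.Icc (0 : ℝ) 1,
      Tendsto (fun i => ∫ x in (0 : ℝ)..q, p i x) l (𝓝 (∫ x in (0 : ℝ)..q, p₀ x))) :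
    TendstoWeakStar (volume.restrict I01) l p p₀ := by
  refine tendstoWeakStar_of_tendsto_setIntegral (fun i => (hp i).aestronglyMeasurable)
    hp₀.aestronglyMeasurable hpC hp₀C fun s hs =>
      tendsto_setIntegral_of_isPiSystem ((BorelSpace.measurable_eq (α := ℝ)).trans
        (borel_eq_generateFrom_Iic ℝ)) isPiSystem_Iic (fun i => (hp i).aestronglyMeasurable)
        hp₀.aestronglyMeasurable hpC hp₀C ?_ ?_ hs
  · have integral_I01 (h : ℝ → ℝ) : ∫ x in I01, h x = ∫ x in (0 : ℝ)..1, h x := by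
      rw [intervalIntegral.integral_of_le zero_le_one, integral_Ioc_eq_integral_Ioo, I01]
    simpa only [integral_I01] using hseg 1 ⟨zero_le_one, le_rfl⟩
  · rintro _ ⟨a, rfl⟩
    rcases le_or_gt 0 a with ha | ha
    · simpa only [setIntegral_Iic_restrict_I01 _ ha] using
        hseg (min 1 a) ⟨le_min zero_le_one ha, min_le_left _ _⟩
    · have hempty : Set.Iic a ∩ I01 = ∅ :=
        Set.eq_empty_of_forall_notMem fun x hx => (hx.2.1.trans_le hx.1).not_gt ha
      simpa only [Measure.restrict_restrict measurableSet_Iic, hempty, setIntegral_empty] using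
        tendsto_const_nhds

lemma TendstoWeakStar.tendsto_integral_mul {α ι : Type*} [MeasurableSpace α] {μ : Measure α}
    {l : Filter ι} {p : ι → α → ℝ} {p₀ : α → ℝ} {g : ι → α → ℝ} {g₀ : α → ℝ} {C : ℝ}
    (h : TendstoWeakStar μ l p p₀) (hp : ∀ i, AEStronglyMeasurable (p i) μ)
    (hpC : ∀ i x, ‖p i x‖ ≤ C) (hg : ∀ i, Integrable (g i) μ) (hg₀ : Integrable g₀ μ)
    (hgg₀ : Tendsto (fun i => ∫ x, ‖g i x - g₀ x‖ ∂μ) l (𝓝 0)) :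
    Tendsto (fun i => ∫ x, g i x * p i x ∂μ) l (𝓝 (∫ x, g₀ x * p₀ x ∂μ)) := by
  have hdiff : Tendsto (fun i => ∫ x, (g i x - g₀ x) * p i x ∂μ) l (𝓝 0) :=
    squeeze_zero_norm (fun i => abs_integral_mul_le ((hg i).sub hg₀) (hpC i))
      (by simpa only [mul_zero] using hgg₀.const_mul C)
  have hsplit (i : ι) :
      ∫ x, (g i x - g₀ x) * p i x ∂μ + ∫ x, g₀ x * p i x ∂μ = ∫ x, g i x * p i x ∂μ := by
    have hint : Integrable (fun x => (g i x - g₀ x) * p i x) μ :=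
      ((hg i).sub hg₀).mul_bdd (hp i) (ae_of_all _ (hpC i))
    rw [← integral_add hint (hg₀.mul_bdd (hp i) (ae_of_all _ (hpC i)))]
    simp only [← add_mul, sub_add_cancel]
  simpa only [hsplit, zero_add] using hdiff.add (h g₀ hg₀)

/-- The test functions of the cut norm: measurable functions with values in `[-1, 1]`. -/
def IsCutTest {α : Type*} [MeasurableSpace α] (p : α → ℝ) : Prop :=
  Measurable p ∧ ∀ x, p x ∈ Set.Icc (-1 : ℝ) 1

/-- The bilinear form `(p, q) ↦ ∫∫ V(x, y) p(x) q(y)` of a kernel `V`. -/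
def bilinForm {α β : Type*} [MeasurableSpace α] [MeasurableSpace β] (μ : Measure α)
    (ν : Measure β) (V : α → β → ℝ) (p : α → ℝ) (q : β → ℝ) : ℝ :=
  ∫ x, ∫ y, V x y * p x * q y ∂ν ∂μ

section BilinForm

variable {α β : Type*} [MeasurableSpace α] [MeasurableSpace β] {μ : Measure α} {ν : Measure β}
  {V U : α → β → ℝ} {p : α → ℝ} {q : β → ℝ}

lemma IsCutTest.norm_le_one (hp : IsCutTest p) (x : α) : ‖p x‖ ≤ 1 :=
  abs_le.2 (hp.2 x)

lemma IsCutTest.aestronglyMeasurable (hp : IsCutTest p) : AEStronglyMeasurable p μ :=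
  hp.1.aestronglyMeasurable

lemma isCutTest_one : IsCutTest fun _ : α => (1 : ℝ) :=
  ⟨measurable_const, fun _ => by norm_num⟩

lemma integrable_kernel_mul_mul (hV : Integrable (Function.uncurry V) (μ.prod ν))
    (hp : IsCutTest p) (hq : IsCutTest q) :
    Integrable (fun z : α × β => V z.1 z.2 * p z.1 * q z.2) (μ.prod ν) :=
  (hV.mul_bdd (hp.1.comp measurable_fst).aestronglyMeasurable
    (ae_of_all _ fun z => hp.norm_le_one z.1)).mul_bdd
    (hq.1.comp measurable_snd).aestronglyMeasurable (ae_of_all _ fun z => hq.norm_le_one z.2)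

variable [SFinite ν]

lemma integrable_integral_kernel_mul (hV : Integrable (Function.uncurry V) (μ.prod ν))
    (hq : IsCutTest q) : Integrable (fun x => ∫ y, V x y * q y ∂ν) μ :=
  (hV.mul_bdd (hq.1.comp measurable_snd).aestronglyMeasurable
    (ae_of_all _ fun z => hq.norm_le_one z.2)).integral_prod_left

variable [SFinite μ]

lemma bilinForm_eq_integral_prod (hV : Integrable (Function.uncurry V) (μ.prod ν))
    (hp : IsCutTest p) (hq : IsCutTest q) :
    bilinForm μ ν V p q = ∫ z, V z.1 z.2 * p z.1 * q z.2 ∂(μ.prod ν) :=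
  (integral_prod _ (integrable_kernel_mul_mul hV hp hq)).symm

lemma bilinForm_sub (hV : Integrable (Function.uncurry V) (μ.prod ν))
    (hU : Integrable (Function.uncurry U) (μ.prod ν)) (hp : IsCutTest p) (hq : IsCutTest q) :
    bilinForm μ ν (fun x y => V x y - U x y) p q = bilinForm μ ν V p q - bilinForm μ ν U p q := by
  rw [bilinForm_eq_integral_prod (hV.sub hU) hp hq, bilinForm_eq_integral_prod hV hp hq,
    bilinForm_eq_integral_prod hU hp hq, ← integral_sub (integrable_kernel_mul_mul hV hp hq)
      (integrable_kernel_mul_mul hU hp hq)]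
  simp only [sub_mul]

lemma abs_bilinForm_le_integral_norm (hV : Integrable (Function.uncurry V) (μ.prod ν))
    (hp : IsCutTest p) (hq : IsCutTest q) :
    |bilinForm μ ν V p q| ≤ ∫ z, ‖Function.uncurry V z‖ ∂(μ.prod ν) := by
  rw [bilinForm_eq_integral_prod hV hp hq]
  refine norm_integral_le_of_norm_le (f := fun z : α × β => V z.1 z.2 * p z.1 * q z.2)
    hV.norm (ae_of_all _ fun z => ?_)
  rw [norm_mul, norm_mul]
  exact mul_le_of_le_one_right (by positivity) (hq.norm_le_one z.2) |>.trans
    (mul_le_of_le_one_right (norm_nonneg _) (hp.norm_le_one z.1))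

variable {ι : Type*} {l : Filter ι} [l.IsCountablyGenerated] {ps : ι → α → ℝ} {qs : ι → β → ℝ}

lemma tendsto_integral_norm_integral_kernel_mul_sub
    (hV : Integrable (Function.uncurry V) (μ.prod ν)) (hqs : ∀ i, IsCutTest (qs i))
    (hq : IsCutTest q) (hqsq : TendstoWeakStar ν l qs q) :
    Tendsto (fun i => ∫ x, ‖(∫ y, V x y * qs i y ∂ν) - ∫ y, V x y * q y ∂ν‖ ∂μ) l (𝓝 0) := by
  rw [← integral_zero α ℝ (μ := μ)]
  refine tendsto_integral_filter_of_dominated_convergence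
    (fun x => (1 * ∫ y, ‖V x y‖ ∂ν) + 1 * ∫ y, ‖V x y‖ ∂ν)
    (Eventually.of_forall fun i =>
      ((integrable_integral_kernel_mul hV (hqs i)).sub
        (integrable_integral_kernel_mul hV hq)).aestronglyMeasurable.norm)
    (Eventually.of_forall fun i => ?_)
    ((hV.norm.integral_prod_left.const_mul 1).add (hV.norm.integral_prod_left.const_mul 1)) ?_
  · filter_upwards [hV.prod_right_ae] with x hx
    rw [norm_norm]
    exact norm_sub_le_of_le (abs_integral_mul_le hx (hqs i).norm_le_one)
      (abs_integral_mul_le hx hq.norm_le_one)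
  · filter_upwards [hV.prod_right_ae] with x hx
    simpa only [sub_self, norm_zero] using
      ((hqsq (V x) hx).sub_const (∫ y, V x y * q y ∂ν)).norm

lemma tendsto_bilinForm (hV : Integrable (Function.uncurry V) (μ.prod ν))
    (hps : ∀ i, IsCutTest (ps i)) (hqs : ∀ i, IsCutTest (qs i)) (hq : IsCutTest q)
    (hpsp : TendstoWeakStar μ l ps p) (hqsq : TendstoWeakStar ν l qs q) :
    Tendsto (fun i => bilinForm μ ν V (ps i) (qs i)) l (𝓝 (bilinForm μ ν V p q)) := by
  have bilinForm_eq (p : α → ℝ) (q : β → ℝ) :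
      bilinForm μ ν V p q = ∫ x, (∫ y, V x y * q y ∂ν) * p x ∂μ := by
    simp only [bilinForm, mul_right_comm _ (p _), integral_mul_const]
  simp only [bilinForm_eq]
  exact hpsp.tendsto_integral_mul (fun i => (hps i).aestronglyMeasurable)
    (fun i => (hps i).norm_le_one) (fun i => integrable_integral_kernel_mul hV (hqs i))
    (integrable_integral_kernel_mul hV hq)
    (tendsto_integral_norm_integral_kernel_mul_sub hV hqs hq hqsq)

end BilinForm

lemma abs_bilinForm_le_cutNorm {V : ℝ → ℝ → ℝ}
    (hV : Integrable (Function.uncurry V) ((volume.restrict I01).prod (volume.restrict I01)))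
    {p q : ℝ → ℝ} (hp : IsCutTest p) (hq : IsCutTest q) :
    |bilinForm (volume.restrict I01) (volume.restrict I01) V p q| ≤ cutNorm V := by
  refine le_csSup ⟨∫ z, ‖Function.uncurry V z‖
    ∂((volume.restrict I01).prod (volume.restrict I01)), ?_⟩ ⟨p, q, hp.1, hq.1, hp.2, hq.2, rfl⟩
  rintro _ ⟨f, g, hf, hg, hf1, hg1, rfl⟩
  exact abs_bilinForm_le_integral_norm hV ⟨hf, hf1⟩ ⟨hg, hg1⟩

namespace YMb

/-- The Young measure seen as a Markov kernel into the compact interval `[-1, 1]`. The projection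
onto `[-1, 1]` only acts on the null set of points `x` with `ν_x([-1, 1]) < 1`. -/
def kernel (ν : YMb) : Kernel ℝ (Set.Icc (-1 : ℝ) 1) :=
  (⟨ν.1, ν.2.1.1⟩ : Kernel ℝ ℝ).map (Set.projIcc (-1) 1 (by norm_num))

instance (ν : YMb) : IsMarkovKernel ν.kernel :=
  have : IsMarkovKernel (⟨ν.1, ν.2.1.1⟩ : Kernel ℝ ℝ) := ⟨ν.2.1.2⟩
  Kernel.IsMarkovKernel.map _ continuous_projIcc.measurable

lemma kernel_apply (ν : YMb) (x : ℝ) :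
    ν.kernel x = (ν.1 x).map (Set.projIcc (-1) 1 (by norm_num)) :=
  Kernel.map_apply _ continuous_projIcc.measurable x

lemma map_val_kernel (ν : YMb) :
    ∀ᵐ x ∂(volume.restrict I01), (ν.kernel x).map Subtype.val = ν.1 x := by
  filter_upwards [ν.2.2] with x hx
  have := ν.2.1.2 x
  rw [kernel_apply, Measure.map_map measurable_subtype_coe continuous_projIcc.measurable]
  conv_rhs => rw [← Measure.map_id (μ := ν.1 x)]
  refine Measure.map_congr ?_
  filter_upwards [(prob_compl_eq_zero_iff measurableSet_Icc).2 hx] with t ht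
  exact congrArg Subtype.val (Set.projIcc_of_mem _ ht)

lemma integral_eq_integral_kernel (ν : YMb) :
    ∀ᵐ x ∂(volume.restrict I01), ∀ f : ℝ → ℝ, ∫ t, f t ∂(ν.1 x) = ∫ t, f t ∂(ν.kernel x) := by
  filter_upwards [ν.map_val_kernel] with x hx f
  rw [← hx, (MeasurableEmbedding.subtype_coe measurableSet_Icc).integral_map]

lemma narrowConv_iff {ν : ℕ → YMb} {ν₀ : YMb} :
    NarrowConv (fun n => (ν n).1) ν₀.1 ↔ ∀ f : C(Set.Icc (-1 : ℝ) 1, ℝ),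
      TendstoWeakStar (volume.restrict I01) atTop (fun n x => ∫ t, f t ∂((ν n).kernel x))
        fun x => ∫ t, f t ∂(ν₀.kernel x) := by
  refine ⟨fun h f => ?_, fun h f hf _ => ?_⟩
  · have integral_kernel (ν : YMb) (x : ℝ) : ∫ t, f t ∂(ν.kernel x) =
        ∫ t, f (Set.projIcc (-1) 1 (by norm_num) t) ∂(ν.1 x) := by
      rw [kernel_apply, integral_map continuous_projIcc.aemeasurable
        f.continuous.aestronglyMeasurable]
    simp only [integral_kernel]
    exact h _ (f.continuous.comp continuous_projIcc) ⟨‖f‖, fun t => f.norm_coe_le_norm _⟩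
  · exact (h ⟨fun t => f t, hf.comp continuous_subtype_val⟩).congr_ae
      (fun n => (ν n).integral_eq_integral_kernel.mono fun x hx => (hx f).symm)
      (ν₀.integral_eq_integral_kernel.mono fun x hx => (hx f).symm)

/-- The `k`-th moment `x ↦ ∫ t ^ k dν_x` of a Young measure. -/
def moment (ν : YMb) (k : ℕ) (x : ℝ) : ℝ := ∫ t, (t : ℝ) ^ k ∂(ν.kernel x)

lemma isCutTest_moment (ν : YMb) (k : ℕ) : IsCutTest (ν.moment k) := by
  have hcont : Continuous fun t : Set.Icc (-1 : ℝ) 1 => (t : ℝ) ^ k :=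
    continuous_subtype_val.pow k
  refine ⟨(hcont.stronglyMeasurable.integral_kernel (κ := ν.kernel)).measurable, fun x =>
    abs_le.1 ?_⟩
  have hpow (t : Set.Icc (-1 : ℝ) 1) : ‖(t : ℝ) ^ k‖ ≤ 1 := by
    simpa only [norm_pow] using pow_le_one₀ (norm_nonneg _) (abs_le.2 t.2)
  simpa only [probReal_univ, mul_one, Real.norm_eq_abs] using!
    norm_integral_le_of_norm_le_const (μ := ν.kernel x) (ae_of_all _ hpow)

lemma tendstoWeakStar_moment {ν : ℕ → YMb} {ν₀ : YMb}
    (h : NarrowConv (fun n => (ν n).1) ν₀.1) (k : ℕ) :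
    TendstoWeakStar (volume.restrict I01) atTop (fun n => (ν n).moment k) (ν₀.moment k) :=
  narrowConv_iff.1 h ⟨fun t => (t : ℝ) ^ k, continuous_subtype_val.pow k⟩

end YMb

lemma integral_integral_abs_sub_sq {α β : Type*} [MeasurableSpace α] [MeasurableSpace β]
    {P : Measure α} {Q : Measure β} [IsProbabilityMeasure P] [IsProbabilityMeasure Q]
    {f : α → ℝ} {g : β → ℝ} (hf : MemLp f 2 P) (hg : MemLp g 2 Q) :
    ∫ t, ∫ s, |f s - g t| ^ 2 ∂P ∂Q =
      ∫ s, f s ^ 2 ∂P + ∫ t, g t ^ 2 ∂Q - 2 * ((∫ s, f s ∂P) * ∫ t, g t ∂Q) := by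
  have hf1 : Integrable f P := hf.integrable one_le_two
  have hg1 : Integrable g Q := hg.integrable one_le_two
  have inner (t : β) : ∫ s, |f s - g t| ^ 2 ∂P =
      ∫ s, f s ^ 2 ∂P + g t ^ 2 - 2 * (∫ s, f s ∂P) * g t := by
    have expand (s : α) : |f s - g t| ^ 2 = f s ^ 2 + g t ^ 2 - 2 * f s * g t := by
      rw [sq_abs]; ring
    simp only [expand]
    rw [integral_sub (hf.integrable_sq.fun_add (integrable_const _))
        ((hf1.const_mul 2).mul_const _),
      integral_add hf.integrable_sq (integrable_const _), integral_const, integral_mul_const,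
      integral_const_mul, probReal_univ, one_smul]
  simp only [inner]
  rw [integral_sub ((integrable_const _).fun_add hg.integrable_sq) (hg1.const_mul _),
    integral_add (integrable_const _) hg.integrable_sq, integral_const, integral_const_mul,
    probReal_univ, one_smul, mul_assoc]

lemma integral_integral_abs_sub_sq_eq_moment (ν : YMb) :
    ∀ᵐ x ∂(volume.restrict I01), ∀ᵐ y ∂(volume.restrict I01),
      ∫ t, ∫ s, |s - t| ^ 2 ∂(ν.1 x) ∂(ν.1 y) =
        ν.moment 2 x + ν.moment 2 y - 2 * (ν.moment 1 x * ν.moment 1 y) := by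
  have memLp_val (x : ℝ) : MemLp (fun t : Set.Icc (-1 : ℝ) 1 => (t : ℝ)) 2 (ν.kernel x) :=
    .of_bound measurable_subtype_coe.aestronglyMeasurable 1 (ae_of_all _ fun t => abs_le.2 t.2)
  filter_upwards [ν.integral_eq_integral_kernel] with x hx
  filter_upwards [ν.integral_eq_integral_kernel] with y hy
  simp only [hx, hy, integral_integral_abs_sub_sq (memLp_val x) (memLp_val y), YMb.moment, pow_one]

section Dirichlet

variable {V U : ℝ → ℝ → ℝ}

lemma graphonDirichlet_eq_bilinForm
    (hV : Integrable (Function.uncurry V) ((volume.restrict I01).prod (volume.restrict I01)))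
    (ν : YMb) :
    graphonDirichlet V ν.1 =
      bilinForm (volume.restrict I01) (volume.restrict I01) V (ν.moment 2) (fun _ => 1) +
      bilinForm (volume.restrict I01) (volume.restrict I01) V (fun _ => 1) (ν.moment 2) -
      2 * bilinForm (volume.restrict I01) (volume.restrict I01) V (ν.moment 1) (ν.moment 1) := by
  have hm := ν.isCutTest_moment
  have int20 := integrable_kernel_mul_mul hV (hm 2) isCutTest_one
  have int02 := integrable_kernel_mul_mul hV isCutTest_one (hm 2)
  have int11 := integrable_kernel_mul_mul hV (hm 1) (hm 1)
  rw [bilinForm_eq_integral_prod hV (hm 2) isCutTest_one,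
    bilinForm_eq_integral_prod hV isCutTest_one (hm 2), bilinForm_eq_integral_prod hV (hm 1) (hm 1),
    ← integral_add int20 int02, ← integral_const_mul,
    ← integral_sub (int20.fun_add int02) (int11.const_mul 2)]
  refine Eq.trans ?_ (integral_prod _ ((int20.fun_add int02).sub (int11.const_mul 2))).symm
  refine integral_congr_ae ((integral_integral_abs_sub_sq_eq_moment ν).mono fun x hx =>
    integral_congr_ae (hx.mono fun y hxy => ?_))
  simp only [hxy, Pi.sub_apply]
  ring

lemma abs_graphonDirichlet_sub_le
    (hV : Integrable (Function.uncurry V) ((volume.restrict I01).prod (volume.restrict I01)))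
    (hU : Integrable (Function.uncurry U) ((volume.restrict I01).prod (volume.restrict I01)))
    (ν : YMb) :
    |graphonDirichlet V ν.1 - graphonDirichlet U ν.1| ≤ 4 * cutNorm fun x y => V x y - U x y := by
  have hm := ν.isCutTest_moment
  have bound {p q : ℝ → ℝ} (hp : IsCutTest p) (hq : IsCutTest q) :=
    abs_le.1 (bilinForm_sub hV hU hp hq ▸
      abs_bilinForm_le_cutNorm (V := fun x y => V x y - U x y) (hV.sub hU) hp hq)
  have b20 := bound (hm 2) isCutTest_one
  have b02 := bound isCutTest_one (hm 2)
  have b11 := bound (hm 1) (hm 1)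
  rw [graphonDirichlet_eq_bilinForm hV, graphonDirichlet_eq_bilinForm hU, abs_le]
  constructor <;> linarith

lemma tendsto_graphonDirichlet {W : ℝ → ℝ → ℝ}
    (hW : Integrable (Function.uncurry W) ((volume.restrict I01).prod (volume.restrict I01)))
    {ν : ℕ → YMb} {ν₀ : YMb} (hν : NarrowConv (fun n => (ν n).1) ν₀.1) :
    Tendsto (fun n => graphonDirichlet W (ν n).1) atTop (𝓝 (graphonDirichlet W ν₀.1)) := by
  have hcut (k : ℕ) (n : ℕ) := (ν n).isCutTest_moment k
  have hlim := YMb.tendstoWeakStar_moment hν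
  simp only [graphonDirichlet_eq_bilinForm hW]
  exact ((tendsto_bilinForm hW (hcut 2) (fun _ => isCutTest_one) isCutTest_one (hlim 2)
      (tendstoWeakStar_const _)).add
    (tendsto_bilinForm hW (fun _ => isCutTest_one) (hcut 2) (ν₀.isCutTest_moment 2)
      (tendstoWeakStar_const _) (hlim 2))).sub
    ((tendsto_bilinForm hW (hcut 1) (hcut 1) (ν₀.isCutTest_moment 1) (hlim 1) (hlim 1)).const_mul 2)

lemma tendsto_graphonDirichlet_of_cutNorm {Ws : ℕ → ℝ → ℝ → ℝ} {W : ℝ → ℝ → ℝ}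
    (hWs : ∀ n, Integrable (Function.uncurry (Ws n))
      ((volume.restrict I01).prod (volume.restrict I01)))
    (hW : Integrable (Function.uncurry W) ((volume.restrict I01).prod (volume.restrict I01)))
    (hcut : Tendsto (fun n => cutNorm fun x y => Ws n x y - W x y) atTop (𝓝 0))
    {ν : ℕ → YMb} {ν₀ : YMb} (hν : NarrowConv (fun n => (ν n).1) ν₀.1) :
    Tendsto (fun n => graphonDirichlet (Ws n) (ν n).1) atTop (𝓝 (graphonDirichlet W ν₀.1)) := by
  have hdiff : Tendsto (fun n => graphonDirichlet (Ws n) (ν n).1 - graphonDirichlet W (ν n).1)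
      atTop (𝓝 0) :=
    squeeze_zero_norm (fun n => abs_graphonDirichlet_sub_le (hWs n) hW (ν n))
      (by simpa only [mul_zero] using hcut.const_mul 4)
  simpa only [sub_add_cancel, zero_add] using hdiff.add (tendsto_graphonDirichlet hW hν)

end Dirichlet

section Functional

variable {n : ℕ} {V : ℝ → ℝ → ℝ}

lemma graphDirichletFn_eq_graphonDirichlet {ν : ℝ → Measure ℝ}
    (h : ∃ u : ℝ → ℝ, IsStepFun n u ∧ Measurable u ∧ (∀ x, u x ∈ Set.Icc (-1 : ℝ) 1) ∧
      ν = deltaYM u) :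
    graphDirichletFn n V ν = graphonDirichlet V ν := by
  rw [graphDirichletFn, dif_pos h]
  conv_rhs => rw [h.choose_spec.2.2.2]
  simp only [graphonDirichlet, deltaYM, integral_dirac]

lemma graphonDirichlet_le_graphDirichletFn (ν : ℝ → Measure ℝ) :
    (graphonDirichlet V ν : EReal) ≤ graphDirichletFn n V ν := by
  by_cases h : ∃ u : ℝ → ℝ, IsStepFun n u ∧ Measurable u ∧ (∀ x, u x ∈ Set.Icc (-1 : ℝ) 1) ∧
      ν = deltaYM u
  · exact (graphDirichletFn_eq_graphonDirichlet h).ge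
  · rw [graphDirichletFn, dif_neg h]
    exact le_top

end Functional

section Rounding

lemma exists_norm_sq_sum_range_le {E T : Type*} [NormedAddCommGroup E] [InnerProductSpace ℝ E]
    {v : ℕ → T → E} {r : ℝ} (hr : ∀ i t, ‖v i t‖ ≤ r) (hv : ∀ i a, ∃ t, ⟪a, v i t⟫ ≤ 0) :
    ∃ t : ℕ → T, ∀ p, ‖∑ i ∈ Finset.range p, v i (t i)‖ ^ 2 ≤ p * r ^ 2 := by
  choose t ht using hv
  let s : ℕ → E := Nat.rec 0 fun i a => a + v i (t i a)
  have sum_eq (p : ℕ) : ∑ i ∈ Finset.range p, v i (t i (s i)) = s p :=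
    Finset.sum_range_induction _ _ rfl p fun _ _ => rfl
  refine ⟨fun i => t i (s i), fun p => ?_⟩
  rw [sum_eq]
  induction p with
  | zero => simp [s]
  | succ p ih =>
    have hsq : ‖v p (t p (s p))‖ ^ 2 ≤ r ^ 2 := by gcongr; exact hr _ _
    calc ‖s p + v p (t p (s p))‖ ^ 2
        = ‖s p‖ ^ 2 + 2 * ⟪s p, v p (t p (s p))⟫ + ‖v p (t p (s p))‖ ^ 2 := norm_add_sq_real _ _
      _ ≤ p * r ^ 2 + 2 * 0 + r ^ 2 := by gcongr; exact ht _ _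
      _ = (p + 1 : ℕ) * r ^ 2 := by push_cast; ring

lemma measurable_stepIdx (n : ℕ) : Measurable (stepIdx n) :=
  (measurable_from_top (f := fun k : ℕ => k - 1)).comp
    (Nat.measurable_ceil.comp (measurable_id.const_mul (n : ℝ)))

lemma stepIdx_eq {n i : ℕ} {x : ℝ} (hx : x ∈ Set.Ioc ((i : ℝ) / n) ((i + 1) / n)) :
    stepIdx n x = i := by
  have hn : (0 : ℝ) < n := by
    rcases Nat.eq_zero_or_pos n with rfl | h
    · simp at hx
    · exact_mod_cast h
  have hceil : ⌈(n : ℝ) * x⌉₊ = i + 1 := by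
    rw [Nat.ceil_eq_iff i.succ_ne_zero]
    have h1 := (div_lt_iff₀' hn).1 hx.1
    have h2 := (le_div_iff₀' hn).1 hx.2
    push_cast
    constructor <;> simpa using by assumption
  rw [stepIdx, hceil, Nat.add_sub_cancel]

lemma isStepFun_comp_stepIdx (n : ℕ) (a : ℕ → ℝ) : IsStepFun n fun x => a (stepIdx n x) :=
  fun _ _ hx _ hy => congrArg a ((stepIdx_eq hx).trans (stepIdx_eq hy).symm)

lemma intervalIntegrable_of_norm_le {E : Type*} [NormedAddCommGroup E] {h : ℝ → E} {C : ℝ}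
    (hh : StronglyMeasurable h) (hC : ∀ x, ‖h x‖ ≤ C) (a b : ℝ) :
    IntervalIntegrable h volume a b :=
  (intervalIntegrable_const (c := C)).mono_fun hh.aestronglyMeasurable
    (ae_of_all _ fun x => (hC x).trans (le_abs_self C))

lemma norm_integral_le_sum_cells_add {E : Type*} [NormedAddCommGroup E] [NormedSpace ℝ E]
    {h : ℝ → E} {C : ℝ} (hh : StronglyMeasurable h) (hC : ∀ x, ‖h x‖ ≤ C) {n : ℕ} (hn : 0 < n)
    {q : ℝ} (hq : 0 ≤ q) :
    ‖∫ x in (0 : ℝ)..q, h x‖ ≤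
      ‖∑ i ∈ Finset.range ⌊n * q⌋₊, ∫ x in (i / n : ℝ)..((i + 1) / n), h x‖ + C / n := by
  have hn' : (0 : ℝ) < n := Nat.cast_pos.2 hn
  have hint := intervalIntegrable_of_norm_le hh hC
  have hsum : ∑ i ∈ Finset.range ⌊n * q⌋₊, ∫ x in (i / n : ℝ)..((i + 1) / n), h x =
      ∫ x in (0 : ℝ)..(⌊n * q⌋₊ / n), h x := by
    have := intervalIntegral.sum_integral_adjacent_intervals (a := fun i : ℕ => (i / n : ℝ))
      (n := ⌊n * q⌋₊) (fun i _ => hint _ _)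
    simpa using this
  have hrest : ‖∫ x in (⌊n * q⌋₊ / n : ℝ)..q, h x‖ ≤ C / n := by
    have hlow : (⌊n * q⌋₊ / n : ℝ) ≤ q :=
      (div_le_iff₀' hn').2 (Nat.floor_le (by positivity))
    have hup : q ≤ (⌊n * q⌋₊ + 1) / n := (le_div_iff₀' hn').2 (Nat.lt_floor_add_one _).le
    have hC0 : 0 ≤ C := (norm_nonneg _).trans (hC 0)
    calc ‖∫ x in (⌊n * q⌋₊ / n : ℝ)..q, h x‖ ≤ C * |q - ⌊n * q⌋₊ / n| :=
          intervalIntegral.norm_integral_le_of_norm_le_const fun x _ => hC x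
      _ ≤ C * (1 / n) := by
          rw [abs_of_nonneg (sub_nonneg.2 hlow)]
          gcongr
          rw [sub_le_iff_le_add, ← add_div, add_comm]
          exact hup
      _ = C / n := mul_one_div _ _
  rw [hsum, ← intervalIntegral.integral_add_adjacent_intervals (hint _ _) (hint _ _)]
  exact (norm_add_le _ _).trans (add_le_add_right hrest _)

variable {E T : Type*} [NormedAddCommGroup E] [InnerProductSpace ℝ E] [CompleteSpace E]
  {φ : T → E} {m : ℝ → E} {C : ℝ}

lemma exists_norm_sq_sum_cells_le (hm : StronglyMeasurable m) (hφC : ∀ t, ‖φ t‖ ≤ C)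
    (hmC : ∀ x, ‖m x‖ ≤ C) (hφm : ∀ a, ∃ t, ∀ x, ⟪a, φ t⟫ ≤ ⟪a, m x⟫) (n : ℕ) :
    ∃ t : ℕ → T, ∀ p, ‖∑ i ∈ Finset.range p, ∫ x in (i / n : ℝ)..((i + 1) / n),
      (φ (t i) - m x)‖ ^ 2 ≤ p * (2 * C / n) ^ 2 := by
  refine exists_norm_sq_sum_range_le
    (v := fun i t => ∫ x in (i / n : ℝ)..((i + 1) / n), (φ t - m x)) (fun i t => ?_) fun i a => ?_
  · have hdist (x : ℝ) : ‖φ t - m x‖ ≤ 2 * C :=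
      (norm_sub_le_of_le (hφC t) (hmC x)).trans_eq (two_mul C).symm
    refine (intervalIntegral.norm_integral_le_of_norm_le_const fun x _ => hdist x).trans_eq ?_
    rw [← sub_div, add_sub_cancel_left, abs_of_nonneg (by positivity), mul_one_div]
  · obtain ⟨t, ht⟩ := hφm a
    refine ⟨t, ?_⟩
    have hle : (i / n : ℝ) ≤ (i + 1) / n := by gcongr; linarith
    have hint : IntervalIntegrable (fun x => φ t - m x) volume (i / n) ((i + 1) / n) :=
      intervalIntegrable_const.sub (intervalIntegrable_of_norm_le hm hmC _ _)
    rw [intervalIntegral.integral_of_le hle, ← integral_inner hint.1]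
    refine integral_nonpos fun x => ?_
    rw [inner_sub_right]
    exact sub_nonpos.2 (ht x)

lemma stronglyMeasurable_comp_stepIdx {E : Type*} [TopologicalSpace E] (n : ℕ) (f : ℕ → E) :
    StronglyMeasurable fun x => f (stepIdx n x) :=
  StronglyMeasurable.of_discrete.comp_measurable (measurable_stepIdx n)

lemma exists_norm_integral_comp_stepIdx_sub_le (hm : StronglyMeasurable m)
    (hφC : ∀ t, ‖φ t‖ ≤ C) (hmC : ∀ x, ‖m x‖ ≤ C) (hφm : ∀ a, ∃ t, ∀ x, ⟪a, φ t⟫ ≤ ⟪a, m x⟫)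
    {n : ℕ} (hn : 0 < n) :
    ∃ t : ℕ → T, ∀ q ∈ Set.Icc (0 : ℝ) 1,
      ‖∫ x in (0 : ℝ)..q, (φ (t (stepIdx n x)) - m x)‖ ≤ 2 * C / √n + 2 * C / n := by
  have hn' : (0 : ℝ) < n := Nat.cast_pos.2 hn
  have hC : 0 ≤ C := (norm_nonneg _).trans (hmC 0)
  obtain ⟨t, ht⟩ := exists_norm_sq_sum_cells_le hm hφC hmC hφm n
  refine ⟨t, fun q hq => ?_⟩
  have hcell (i : ℕ) : ∫ x in (i / n : ℝ)..((i + 1) / n), (φ (t (stepIdx n x)) - m x) =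
      ∫ x in (i / n : ℝ)..((i + 1) / n), (φ (t i) - m x) := by
    have hle : (i / n : ℝ) ≤ (i + 1) / n := by gcongr; linarith
    rw [intervalIntegral.integral_of_le hle, intervalIntegral.integral_of_le hle]
    exact setIntegral_congr_fun measurableSet_Ioc fun x hx => by simp only [stepIdx_eq hx]
  have hfloor : (⌊n * q⌋₊ : ℝ) ≤ n :=
    (Nat.floor_le (by have := hq.1; positivity)).trans (mul_le_of_le_one_right hn'.le hq.2)
  have hsum : ‖∑ i ∈ Finset.range ⌊n * q⌋₊,
      ∫ x in (i / n : ℝ)..((i + 1) / n), (φ (t (stepIdx n x)) - m x)‖ ≤ 2 * C / √n := by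
    refine (pow_le_pow_iff_left₀ (norm_nonneg _) (by positivity) two_ne_zero).1 ?_
    calc _ ≤ ⌊n * q⌋₊ * (2 * C / n) ^ 2 := by simpa only [hcell] using ht _
      _ ≤ n * (2 * C / n) ^ 2 := by gcongr
      _ = (2 * C / √n) ^ 2 := by
        rw [div_pow _ (√n), Real.sq_sqrt hn'.le]
        field_simp
  refine (norm_integral_le_sum_cells_add (C := 2 * C)
    ((stronglyMeasurable_comp_stepIdx n fun i => φ (t i)).sub hm) (fun x => ?_) hn hq.1).trans
    (add_le_add_left hsum _)
  exact (norm_sub_le_of_le (hφC _) (hmC x)).trans_eq (two_mul C).symm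

lemma exists_tendstoWeakStar_inner_comp_stepIdx (hm : StronglyMeasurable m)
    (hφC : ∀ t, ‖φ t‖ ≤ C) (hmC : ∀ x, ‖m x‖ ≤ C) (hφm : ∀ a, ∃ t, ∀ x, ⟪a, φ t⟫ ≤ ⟪a, m x⟫) :
    ∃ t : ℕ → ℕ → T, ∀ a : E, TendstoWeakStar (volume.restrict I01) atTop
      (fun n x => ⟪a, φ (t n (stepIdx n x))⟫) fun x => ⟪a, m x⟫ := by
  have : Nonempty T := (hφm 0).nonempty
  choose! t ht using fun n (hn : 0 < n) =>
    exists_norm_integral_comp_stepIdx_sub_le hm hφC hmC hφm hn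
  have hstep (n : ℕ) : StronglyMeasurable fun x => φ (t n (stepIdx n x)) :=
    stronglyMeasurable_comp_stepIdx n fun i => φ (t n i)
  have interval_inner {h : ℝ → E} (hh : StronglyMeasurable h) (hhC : ∀ x, ‖h x‖ ≤ C) (a : E)
      (q : ℝ) : ∫ x in (0 : ℝ)..q, ⟪a, h x⟫ = ⟪a, ∫ x in (0 : ℝ)..q, h x⟫ :=
    (innerSL ℝ a).intervalIntegral_comp_comm (intervalIntegrable_of_norm_le hh hhC 0 q)
  have norm_inner_le (a : E) {b : E} (hb : ‖b‖ ≤ C) : ‖⟪a, b⟫‖ ≤ ‖a‖ * C :=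
    (norm_inner_le_norm a b).trans (by gcongr)
  refine ⟨t, fun a => tendstoWeakStar_I01_of_tendsto_intervalIntegral
    (fun n => (stronglyMeasurable_const.inner (hstep n)).measurable)
    (stronglyMeasurable_const.inner hm).measurable
    (fun n x => norm_inner_le a (hφC _)) (fun x => norm_inner_le a (hmC x)) fun q hq => ?_⟩
  simp only [interval_inner (hstep _) (fun _ => hφC _), interval_inner hm hmC]
  refine Tendsto.inner tendsto_const_nhds (tendsto_iff_norm_sub_tendsto_zero.2 ?_)
  have hbound : Tendsto (fun n : ℕ => 2 * C / √n + 2 * C / n) atTop (𝓝 0) := by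
    simpa only [add_zero, Function.comp_apply] using
      ((tendsto_const_nhds.div_atTop (Real.tendsto_sqrt_atTop.comp tendsto_natCast_atTop_atTop)).add
        (tendsto_const_div_atTop_nhds_zero_nat (2 * C)))
  refine squeeze_zero' (Eventually.of_forall fun n => norm_nonneg _) ?_ hbound
  filter_upwards [eventually_gt_atTop 0] with n hn
  rw [← intervalIntegral.integral_sub (intervalIntegrable_of_norm_le (hstep n) (fun _ => hφC _) 0 q)
    (intervalIntegrable_of_norm_le hm hmC 0 q)]
  exact ht n hn q hq

end Rounding

section CompactTarget

lemma exists_dense_setOf_eq_inner {K E : Type*} [TopologicalSpace K] [CompactSpace K]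
    [T2Space K] [SecondCountableTopology K] [NormedAddCommGroup E] [InnerProductSpace ℝ E]
    [CompleteSpace E] {e : ℕ → E} (he : Orthonormal ℝ e) :
    ∃ φ : C(K, E), Dense {f : C(K, ℝ) | ∃ a, ∀ t, f t = ⟪a, φ t⟫} := by
  let f : ℕ → C(K, ℝ) := TopologicalSpace.denseSeq C(K, ℝ)
  let c : ℕ → ℝ := fun k => (1 / 2) ^ k / (1 + ‖f k‖)
  let term : ℕ → C(K, E) := fun k => ⟨fun t => (c k * f k t) • e k, by fun_prop⟩
  have hc (k : ℕ) : 0 < c k := by positivity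
  have hterm (k : ℕ) : ‖term k‖ ≤ (1 / 2) ^ k := by
    refine (ContinuousMap.norm_le _ (by positivity)).2 fun t => ?_
    calc ‖(c k * f k t) • e k‖ = c k * ‖f k t‖ := by
          rw [norm_smul, he.norm_eq_one, mul_one, norm_mul, Real.norm_of_nonneg (hc k).le]
      _ ≤ c k * (1 + ‖f k‖) := by gcongr; linarith [(f k).norm_coe_le_norm t]
      _ = (1 / 2) ^ k := div_mul_cancel₀ _ (by positivity)
  have hsum : Summable term := .of_norm_bounded summable_geometric_two hterm
  refine ⟨∑' k, term k, (TopologicalSpace.denseRange_denseSeq C(K, ℝ)).mono ?_⟩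
  rintro _ ⟨k, rfl⟩
  refine ⟨(c k)⁻¹ • e k, fun t => ?_⟩
  have hcoord : ⟪e k, (∑' j, term j) t⟫ = c k * f k t := by
    rw [← ContinuousMap.tsum_apply hsum, ← innerSL_apply_apply ℝ,
      (innerSL ℝ (e k)).map_tsum (ContinuousMap.summable_apply hsum t), tsum_eq_single k]
    · simp [term, he.1 k]
    · intro j hj
      simp [term, he.2 hj.symm]
  rw [real_inner_smul_left, hcoord, inv_mul_cancel_left₀ (hc k).ne']

lemma norm_integral_continuousMap_le {K E : Type*} [TopologicalSpace K] [CompactSpace K]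
    [MeasurableSpace K] [NormedAddCommGroup E] [NormedSpace ℝ E] (f : C(K, E)) (P : Measure K)
    [IsProbabilityMeasure P] : ‖∫ t, f t ∂P‖ ≤ ‖f‖ := by
  simpa only [probReal_univ, mul_one] using
    norm_integral_le_of_norm_le_const (ae_of_all P f.norm_coe_le_norm)

variable {α K : Type*} [MeasurableSpace α] [TopologicalSpace K] [CompactSpace K]
  [MeasurableSpace K] [BorelSpace K]

lemma exists_inner_le_inner_integral [SecondCountableTopology K] [Nonempty K] {E : Type*}
    [NormedAddCommGroup E] [InnerProductSpace ℝ E] [CompleteSpace E] (κ : Kernel α K)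
    [IsMarkovKernel κ] (φ : C(K, E)) (a : E) :
    ∃ t, ∀ x, ⟪a, φ t⟫ ≤ ⟪a, ∫ s, φ s ∂(κ x)⟫ := by
  have hinner : Continuous fun s => ⟪a, φ s⟫ := continuous_const.inner φ.continuous
  obtain ⟨t, -, ht⟩ := isCompact_univ.exists_isMinOn Set.univ_nonempty hinner.continuousOn
  refine ⟨t, fun x => ?_⟩
  have hφ : Integrable φ (κ x) :=
    .of_bound φ.continuous.aestronglyMeasurable ‖φ‖ (ae_of_all _ φ.norm_coe_le_norm)
  rw [← integral_inner hφ]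
  calc ⟪a, φ t⟫ = ∫ _, ⟪a, φ t⟫ ∂(κ x) := by simp
    _ ≤ ∫ s, ⟪a, φ s⟫ ∂(κ x) := integral_mono (integrable_const _) (hφ.const_inner a)
      fun s => ht (Set.mem_univ s)

lemma lipschitzWith_integral_mul_integral_kernel {μ : Measure α} {g : α → ℝ}
    (hg : Integrable g μ) (κ : Kernel α K) [IsMarkovKernel κ] :
    LipschitzWith (∫ x, ‖g x‖ ∂μ).toNNReal
      fun f : C(K, ℝ) => ∫ x, g x * ∫ t, f t ∂(κ x) ∂μ := by
  refine LipschitzWith.of_dist_le' fun f h => ?_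
  have integrable_kernel (f : C(K, ℝ)) (x : α) : Integrable f (κ x) :=
    .of_bound f.continuous.aestronglyMeasurable ‖f‖ (ae_of_all _ f.norm_coe_le_norm)
  have integrable_mul (f : C(K, ℝ)) : Integrable (fun x => g x * ∫ t, f t ∂(κ x)) μ :=
    hg.mul_bdd (f.continuous.stronglyMeasurable.integral_kernel).aestronglyMeasurable
      (ae_of_all _ fun x => norm_integral_continuousMap_le f (κ x))
  have hsub : ∫ x, g x * ∫ t, f t ∂(κ x) ∂μ - ∫ x, g x * ∫ t, h t ∂(κ x) ∂μ =
      ∫ x, g x * ∫ t, (f - h) t ∂(κ x) ∂μ := by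
    rw [← integral_sub (integrable_mul f) (integrable_mul h)]
    simp only [← mul_sub, ContinuousMap.sub_apply,
      integral_sub (integrable_kernel f _) (integrable_kernel h _)]
  rw [Real.dist_eq, hsub, dist_eq_norm, mul_comm]
  exact abs_integral_mul_le hg fun x => norm_integral_continuousMap_le (f - h) (κ x)

lemma tendstoWeakStar_integral_kernel_of_dense {ι : Type*} {l : Filter ι} {μ : Measure α}
    {κ : ι → Kernel α K} [∀ i, IsMarkovKernel (κ i)] {κ₀ : Kernel α K} [IsMarkovKernel κ₀]
    {D : Set C(K, ℝ)} (hD : Dense D)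
    (h : ∀ f ∈ D, TendstoWeakStar μ l (fun i x => ∫ t, f t ∂(κ i x)) fun x => ∫ t, f t ∂(κ₀ x))
    (f : C(K, ℝ)) :
    TendstoWeakStar μ l (fun i x => ∫ t, f t ∂(κ i x)) fun x => ∫ t, f t ∂(κ₀ x) := by
  intro g hg
  have hclosed : IsClosed {f : C(K, ℝ) | Tendsto (fun i => ∫ x, g x * ∫ t, f t ∂(κ i x) ∂μ) l
      (𝓝 (∫ x, g x * ∫ t, f t ∂(κ₀ x) ∂μ))} :=
    Equicontinuous.isClosed_setOfPred_tendsto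
      (LipschitzWith.uniformEquicontinuous _ _ fun i =>
        lipschitzWith_integral_mul_integral_kernel hg (κ i)).equicontinuous
      (lipschitzWith_integral_mul_integral_kernel hg κ₀).continuous
  exact hclosed.closure_subset_iff.2 (fun f hf => h f hf g hg) (hD f)

end CompactTarget

namespace YMb

/-- The Young measure `δ_u` of a measurable function `u` with values in `[-1, 1]`. -/
def delta (u : ℝ → Set.Icc (-1 : ℝ) 1) (hu : Measurable u) : YMb :=
  ⟨deltaYM fun x => u x, ⟨Measure.measurable_dirac.comp hu.subtype_val,
    fun _ => Measure.dirac.isProbabilityMeasure⟩,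
    ae_of_all _ fun x => Measure.dirac_apply_of_mem (u x).2⟩

lemma kernel_delta (u : ℝ → Set.Icc (-1 : ℝ) 1) (hu : Measurable u) (x : ℝ) :
    (delta u hu).kernel x = Measure.dirac (u x) := by
  rw [kernel_apply]
  exact (Measure.map_dirac' continuous_projIcc.measurable _).trans (by rw [Set.projIcc_val])

lemma exists_tendsto_delta_comp_stepIdx (ν : YMb) :
    ∃ t : ℕ → ℕ → Set.Icc (-1 : ℝ) 1, NarrowConv
      (fun n => (delta (fun x => t n (stepIdx n x))
        (stronglyMeasurable_comp_stepIdx n (t n)).measurable).1) ν.1 := by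
  have : Nonempty (Set.Icc (-1 : ℝ) 1) := ⟨0, by norm_num⟩
  obtain ⟨φ, hφ⟩ := exists_dense_setOf_eq_inner (K := Set.Icc (-1 : ℝ) 1)
    (default : HilbertBasis ℕ ℝ (lp (fun _ : ℕ => ℝ) 2)).orthonormal
  have inner_integral (a : lp (fun _ : ℕ => ℝ) 2) (x : ℝ) :
      ⟪a, ∫ s, φ s ∂(ν.kernel x)⟫ = ∫ s, ⟪a, φ s⟫ ∂(ν.kernel x) :=
    (integral_inner (.of_bound φ.continuous.aestronglyMeasurable ‖φ‖
      (ae_of_all _ φ.norm_coe_le_norm)) a).symm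
  obtain ⟨t, ht⟩ := exists_tendstoWeakStar_inner_comp_stepIdx
    (φ.continuous.stronglyMeasurable.integral_kernel (κ := ν.kernel)) φ.norm_coe_le_norm
    (fun x => norm_integral_continuousMap_le φ (ν.kernel x))
    (exists_inner_le_inner_integral ν.kernel φ)
  refine ⟨t, narrowConv_iff.2 (tendstoWeakStar_integral_kernel_of_dense hφ ?_)⟩
  rintro f ⟨a, hfa⟩
  simpa only [kernel_delta, integral_dirac, hfa, inner_integral] using ht a

end YMb

lemma integrableOn_stepGraphon (n : ℕ) (A : Fin n → Fin n → ℝ) :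
    IntegrableOn (Function.uncurry (stepGraphon n A)) (I01 ×ˢ I01) := by
  let a : ℕ × ℕ → ℝ := fun k =>
    if hx : k.1 < n then if hy : k.2 < n then A ⟨k.1, hx⟩ ⟨k.2, hy⟩ else 0 else 0
  have hmeas : Measurable (Function.uncurry (stepGraphon n A)) :=
    (measurable_of_countable a).comp
      (((measurable_stepIdx n).comp measurable_fst).prodMk
        ((measurable_stepIdx n).comp measurable_snd))
  obtain ⟨C, hC⟩ := Finite.exists_le fun ij : Fin n × Fin n => ‖A ij.1 ij.2‖
  have hbound (z : ℝ × ℝ) : ‖Function.uncurry (stepGraphon n A) z‖ ≤ max C 0 := by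
    rw [Function.uncurry, stepGraphon]
    split_ifs with hx hy
    · exact (hC (_, _)).trans (le_max_left _ _)
    · simp
    · simp
  rw [IntegrableOn, Measure.volume_eq_prod, ← Measure.prod_restrict]
  exact .of_bound hmeas.aestronglyMeasurable _ (ae_of_all _ hbound)

theorem graphDirichlet_gammaConv_graphonDirichlet_general
    (Wseq : ℕ → ℝ → ℝ → ℝ)
    (hWseqint : ∀ n, IntegrableOn (Function.uncurry (Wseq n)) (I01 ×ˢ I01))
    (W : ℝ → ℝ → ℝ) (hWint : IntegrableOn (Function.uncurry W) (I01 ×ˢ I01))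
    (hcut : Tendsto (fun n => cutNorm (fun x y => Wseq n x y - W x y)) atTop (nhds 0)) :
    GammaConv (fun (νs : ℕ → YMb) (ν : YMb) => NarrowConv (fun n => (νs n).1) ν.1)
      (fun n ν => graphDirichletFn n (Wseq n) ν.1)
      (fun ν => ((graphonDirichlet W ν.1 : ℝ) : EReal)) := by
  simp only [IntegrableOn, Measure.volume_eq_prod, ← Measure.prod_restrict] at hWseqint hWint
  have energy_tendsto {νs : ℕ → YMb} {ν : YMb} (hν : NarrowConv (fun n => (νs n).1) ν.1) :
      Tendsto (fun n => (graphonDirichlet (Wseq n) (νs n).1 : EReal)) atTop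
        (𝓝 (graphonDirichlet W ν.1 : EReal)) :=
    EReal.tendsto_coe.2 (tendsto_graphonDirichlet_of_cutNorm hWseqint hWint hcut hν)
  refine ⟨fun νs ν hν => ?_, fun ν => ?_⟩
  · exact (energy_tendsto hν).liminf_eq.ge.trans
      (liminf_le_liminf (Eventually.of_forall fun n => graphonDirichlet_le_graphDirichletFn _))
  · obtain ⟨t, ht⟩ := ν.exists_tendsto_delta_comp_stepIdx
    refine ⟨_, ht, ((energy_tendsto ht).congr fun n => ?_).limsup_eq.le⟩
    exact (graphDirichletFn_eq_graphonDirichlet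
      ⟨_, isStepFun_comp_stepIdx n fun i => t n i,
        (stronglyMeasurable_comp_stepIdx n fun i => (t n i : ℝ)).measurable,
        fun _ => (t n _).2, rfl⟩).symm

/-- Γ-convergence of the graph Dirichlet energies to the graphon Dirichlet energy. -/
theorem graphDirichlet_gammaConv_graphonDirichlet
    (Wseq : ℕ → ℝ → ℝ → ℝ)
    (hstep : ∀ n, ∃ A : Fin n → Fin n → ℝ, (∀ i j, A i j = A j i) ∧
      (∀ i j, 0 ≤ A i j) ∧ Wseq n = stepGraphon n A)
    (hWseqBd : ∃ C : ℝ, ∀ n, (∫ x in I01, ∫ y in I01, |Wseq n x y|) ≤ C)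
    (W : ℝ → ℝ → ℝ) (hWmeas : Measurable (Function.uncurry W))
    (hWnonneg : ∀ x y, 0 ≤ W x y) (hWsymm : ∀ x y, W x y = W y x)
    (hWint : IntegrableOn (Function.uncurry W) (I01 ×ˢ I01))
    (hcut : Tendsto (fun n => cutNorm (fun x y => Wseq n x y - W x y)) atTop (nhds 0)) :
    GammaConv (fun (νs : ℕ → YMb) (ν : YMb) => NarrowConv (fun n => (νs n).1) ν.1)
      (fun n ν => graphDirichletFn n (Wseq n) ν.1)
      (fun ν => ((graphonDirichlet W ν.1 : ℝ) : EReal)) := by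
  refine graphDirichlet_gammaConv_graphonDirichlet_general Wseq (fun n => ?_) W hWint hcut
  obtain ⟨A, -, -, hA⟩ := hstep n
  exact hA ▸ integrableOn_stepGraphon n A
end
end

section
/- Let n ≥ 1 and γ ∈ ℝ with |γ| ≥ 1. (i) Every v ∈ ℝⁿ with Σ_{i=1}^n v_i = γn satisfies Σ_{i=1}^n (v_i² − 1)² ≥ n(γ² − 1)², with equality if and only if v_i = γ for all i. (ii) Consequently, for p > 0 and ε > 0 with εp < 1, and c ∈ ℝ with |c| ≥ √(1−εp), the unique minimizer of GL^A_ε(u) over u ∈ ℝⁿ subject to (1/n)Σ_{i=1}^n u_i = c, where A_{ij} = p for all i,j, is the constant vector u_i = c for all i, and the minimum value is (1/ε)(c² − 1)². -/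
noncomputable section

/-- The double-well potential `Φ(s) = (s² − 1)²`. -/
def Phi (s : ℝ) : ℝ := (s ^ 2 - 1) ^ 2

/-- The graph Ginzburg–Landau functional
`GL^A_ε(u) = (1/n²) Σ_{i,j} A_{ij}(u_i−u_j)² + (1/(εn)) Σ_i Φ(u_i)`. -/
def glGraph (n : ℕ) (A : Fin n → Fin n → ℝ) (ε : ℝ) (u : Fin n → ℝ) : ℝ :=
  (1 / (n : ℝ) ^ 2) * ∑ i : Fin n, ∑ j : Fin n, A i j * (u i - u j) ^ 2
    + (1 / (ε * n)) * ∑ i : Fin n, Phi (u i)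

/-!
Expanding the double well at `c` gives
`Φ(s) = Φ(c) + 4c(c² − 1)(s − c) + (s − c)²((s + c)² + 2(c² − 1))`. Summed over a vector with mean
`c`, the linear term vanishes, while the interaction energy of a complete graph with weights `p`
is `2p/n` times `Σ (u_i − c)²` and so replaces `2(c² − 1)` by `2(c² − 1 + εp)`. Once this number is
nonnegative, the constant vector is a minimizer. If the remainder vanishes, each `u_i` is `c` or
`−c`; in both cases `(u_i − c)² = −2c(u_i − c)`, and the right-hand side sums to zero, so `u ≡ c`.
The pure potential bound is the case `p = 0`.
-/

/-- The double well with a quadratic penalty of strength `2μ` for the distance to `c`. On a complete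
graph with weights `p` and for a vector of mean `c`, the Ginzburg–Landau functional is a multiple of
the sum of these one-variable energies with `μ = εp`. -/
def penalizedWell (μ c s : ℝ) : ℝ := Phi s + 2 * μ * (s - c) ^ 2

lemma penalizedWell_zero (c s : ℝ) : penalizedWell 0 c s = Phi s := by
  simp [penalizedWell]

lemma penalizedWell_eq_taylor (μ c s : ℝ) :
    penalizedWell μ c s = Phi c + 4 * c * (c ^ 2 - 1) * (s - c)
      + (s - c) ^ 2 * ((s + c) ^ 2 + 2 * (c ^ 2 - 1 + μ)) := by
  unfold penalizedWell Phi
  ring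

section FinsetSums

variable {ι : Type*} {s : Finset ι}

lemma sum_sum_sub_sq {R : Type*} [CommRing R] {u : ι → R} {c : R}
    (hu : ∑ i ∈ s, (u i - c) = 0) :
    ∑ i ∈ s, ∑ j ∈ s, (u i - u j) ^ 2 = 2 * s.card * ∑ i ∈ s, (u i - c) ^ 2 := by
  have hexpand (i j : ι) :
      (u i - u j) ^ 2 = (u i - c) ^ 2 + (u j - c) ^ 2 - 2 * (u i - c) * (u j - c) := by ring
  simp only [hexpand, Finset.sum_add_distrib, Finset.sum_sub_distrib, ← Finset.mul_sum, hu,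
    Finset.sum_const, nsmul_eq_mul, mul_zero, sub_zero]
  ring

variable {u : ι → ℝ} {μ c : ℝ}

lemma sum_penalizedWell_eq (hu : ∑ i ∈ s, (u i - c) = 0) :
    ∑ i ∈ s, penalizedWell μ c (u i) = s.card * Phi c
      + ∑ i ∈ s, (u i - c) ^ 2 * ((u i + c) ^ 2 + 2 * (c ^ 2 - 1 + μ)) := by
  simp only [penalizedWell_eq_taylor, Finset.sum_add_distrib, ← Finset.mul_sum, hu,
    Finset.sum_const, nsmul_eq_mul, mul_zero, add_zero]

lemma card_mul_Phi_le_sum_penalizedWell (hc : 1 - μ ≤ c ^ 2) (hu : ∑ i ∈ s, (u i - c) = 0) :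
    s.card * Phi c ≤ ∑ i ∈ s, penalizedWell μ c (u i) := by
  have hk : 0 ≤ c ^ 2 - 1 + μ := by linarith
  rw [sum_penalizedWell_eq hu]
  exact le_add_of_nonneg_right (Finset.sum_nonneg fun i _ => by positivity)

lemma eq_of_forall_eq_or_eq_neg_of_sum_sub_eq_zero (h : ∀ i ∈ s, u i = c ∨ u i = -c)
    (hu : ∑ i ∈ s, (u i - c) = 0) : ∀ i ∈ s, u i = c := by
  have hsq : ∑ i ∈ s, (u i - c) ^ 2 = 0 := calc
    ∑ i ∈ s, (u i - c) ^ 2 = ∑ i ∈ s, -2 * c * (u i - c) :=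
      Finset.sum_congr rfl fun i hi => by rcases h i hi with hi | hi <;> rw [hi] <;> ring
    _ = 0 := by rw [← Finset.mul_sum, hu, mul_zero]
  intro i hi
  have hzero := (Finset.sum_eq_zero_iff_of_nonneg fun i _ => sq_nonneg (u i - c)).1 hsq i hi
  exact sub_eq_zero.1 (sq_eq_zero_iff.1 hzero)

lemma sum_penalizedWell_eq_card_mul_Phi_iff (hc : 1 - μ ≤ c ^ 2)
    (hu : ∑ i ∈ s, (u i - c) = 0) :
    ∑ i ∈ s, penalizedWell μ c (u i) = s.card * Phi c ↔ ∀ i ∈ s, u i = c := by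
  have hk : 0 ≤ c ^ 2 - 1 + μ := by linarith
  rw [sum_penalizedWell_eq hu, add_eq_left,
    Finset.sum_eq_zero_iff_of_nonneg fun i _ => by positivity]
  refine ⟨fun h => eq_of_forall_eq_or_eq_neg_of_sum_sub_eq_zero (fun i hi => ?_) hu,
    fun h i hi => by simp [h i hi]⟩
  rcases mul_eq_zero.1 (h i hi) with hsub | hadd
  · exact .inl (sub_eq_zero.1 (sq_eq_zero_iff.1 hsub))
  · have hsq : (u i + c) ^ 2 = 0 := by linarith [sq_nonneg (u i + c)]
    exact .inr (eq_neg_of_add_eq_zero_left (sq_eq_zero_iff.1 hsq))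

end FinsetSums

section CompleteGraph

variable {n : ℕ} {p ε c : ℝ} {u : Fin n → ℝ}

lemma sum_sub_eq_zero_iff_sum_eq_mul : ∑ i, (u i - c) = 0 ↔ ∑ i, u i = c * n := by
  simp [Finset.sum_sub_distrib, sub_eq_zero, mul_comm]

lemma sum_sub_eq_zero_of_mean_eq (hn : n ≠ 0) (hu : (1 / (n : ℝ)) * ∑ i, u i = c) :
    ∑ i, (u i - c) = 0 := by
  rw [sum_sub_eq_zero_iff_sum_eq_mul, ← hu]
  field_simp

lemma glGraph_const (hn : n ≠ 0) (A : Fin n → Fin n → ℝ) (ε c : ℝ) :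
    glGraph n A ε (fun _ => c) = (1 / ε) * Phi c := by
  simp only [glGraph, sub_self, ne_eq, OfNat.ofNat_ne_zero, not_false_eq_true, zero_pow, mul_zero,
    Finset.sum_const_zero, zero_add, Finset.sum_const, Finset.card_fin, nsmul_eq_mul]
  field_simp

lemma glGraph_complete_eq (hn : n ≠ 0) (hε : ε ≠ 0) (hu : ∑ i, (u i - c) = 0) :
    glGraph n (fun _ _ => p) ε u
      = (1 / (ε * n)) * ∑ i, penalizedWell (ε * p) c (u i) := by
  simp only [glGraph, penalizedWell, ← Finset.mul_sum, sum_sum_sub_sq hu, Finset.card_fin,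
    Finset.sum_add_distrib]
  field_simp
  ring

lemma glGraph_const_le_complete (hn : n ≠ 0) (hε : 0 < ε) (hc : 1 - ε * p ≤ c ^ 2)
    (hu : ∑ i, (u i - c) = 0) :
    glGraph n (fun _ _ => p) ε (fun _ => c) ≤ glGraph n (fun _ _ => p) ε u := by
  have hbound := card_mul_Phi_le_sum_penalizedWell hc hu
  rw [Finset.card_fin] at hbound
  calc
    glGraph n (fun _ _ => p) ε (fun _ => c) = (1 / (ε * n)) * (n * Phi c) := by
      rw [glGraph_const hn]
      field_simp
    _ ≤ (1 / (ε * n)) * ∑ i, penalizedWell (ε * p) c (u i) := by gcongr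
    _ = glGraph n (fun _ _ => p) ε u := (glGraph_complete_eq hn hε.ne' hu).symm

lemma glGraph_complete_eq_const_iff (hn : n ≠ 0) (hε : ε ≠ 0) (hc : 1 - ε * p ≤ c ^ 2)
    (hu : ∑ i, (u i - c) = 0) :
    glGraph n (fun _ _ => p) ε u = glGraph n (fun _ _ => p) ε (fun _ => c) ↔
      u = fun _ => c := by
  have hconst : (1 / ε) * Phi c = (1 / (ε * n)) * (n * Phi c) := by field_simp
  have heq := sum_penalizedWell_eq_card_mul_Phi_iff hc hu
  rw [Finset.card_fin] at heq
  rw [glGraph_const hn, glGraph_complete_eq hn hε hu, hconst,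
    mul_right_inj' (by positivity), heq, funext_iff]
  simp only [Finset.mem_univ, forall_const]

end CompleteGraph

theorem oversaturated_minimizers_general (n : ℕ) (hn : 1 ≤ n) (γ : ℝ) (hγ : 1 ≤ |γ|) :
    (∀ v : Fin n → ℝ, (∑ i : Fin n, v i) = γ * n →
      ((n : ℝ) * (γ ^ 2 - 1) ^ 2 ≤ ∑ i : Fin n, ((v i) ^ 2 - 1) ^ 2 ∧
        ((∑ i : Fin n, ((v i) ^ 2 - 1) ^ 2) = (n : ℝ) * (γ ^ 2 - 1) ^ 2 ↔
          ∀ i, v i = γ))) ∧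
    (∀ p ε c : ℝ, 0 < ε → 1 - ε * p ≤ c ^ 2 →
      glGraph n (fun _ _ => p) ε (fun _ => c) = (1 / ε) * (c ^ 2 - 1) ^ 2 ∧
      (∀ u : Fin n → ℝ, (1 / (n : ℝ)) * ∑ i : Fin n, u i = c →
        glGraph n (fun _ _ => p) ε (fun _ => c) ≤ glGraph n (fun _ _ => p) ε u) ∧
      (∀ u : Fin n → ℝ, (1 / (n : ℝ)) * ∑ i : Fin n, u i = c →
        glGraph n (fun _ _ => p) ε u = glGraph n (fun _ _ => p) ε (fun _ => c) →
        u = fun _ => c)) := by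
  have hn0 : n ≠ 0 := Nat.one_le_iff_ne_zero.1 hn
  refine ⟨fun v hv => ?_, fun p ε c hε hc => ⟨glGraph_const hn0 _ ε c, fun u hu => ?_,
    fun u hu => ?_⟩⟩
  · have hγsq : 1 - 0 ≤ γ ^ 2 := by rwa [sub_zero, one_le_sq_iff_one_le_abs]
    have hcentred := sum_sub_eq_zero_iff_sum_eq_mul.2 hv
    have hle := card_mul_Phi_le_sum_penalizedWell hγsq hcentred
    have heq := sum_penalizedWell_eq_card_mul_Phi_iff hγsq hcentred
    simp only [penalizedWell_zero, Finset.card_fin, Finset.mem_univ, forall_const] at hle heq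
    exact ⟨hle, heq⟩
  · exact glGraph_const_le_complete hn0 hε hc (sum_sub_eq_zero_of_mean_eq hn0 hu)
  · exact (glGraph_complete_eq_const_iff hn0 hε.ne' hc (sum_sub_eq_zero_of_mean_eq hn0 hu)).1

/-- Non-oversaturation: for `|γ| ≥ 1`, the convexified lower bound
`Σ (v_i² − 1)² ≥ n(γ² − 1)²` holds under `Σ v_i = γn` with equality iff `v ≡ γ`; consequently
for `|c| ≥ √(1−εp)` the unique constrained minimizer of the Ginzburg–Landau functional on the
complete weighted graph is the constant vector `c`, with minimum value `(1/ε)(c² − 1)²`. -/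
theorem oversaturated_minimizers (n : ℕ) (hn : 1 ≤ n) (γ : ℝ) (hγ : 1 ≤ |γ|) :
    (∀ v : Fin n → ℝ, (∑ i : Fin n, v i) = γ * n →
      ((n : ℝ) * (γ ^ 2 - 1) ^ 2 ≤ ∑ i : Fin n, ((v i) ^ 2 - 1) ^ 2 ∧
        ((∑ i : Fin n, ((v i) ^ 2 - 1) ^ 2) = (n : ℝ) * (γ ^ 2 - 1) ^ 2 ↔
          ∀ i, v i = γ))) ∧
    (∀ p ε c : ℝ, 0 < p → 0 < ε → ε * p < 1 → Real.sqrt (1 - ε * p) ≤ |c| →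
      glGraph n (fun _ _ => p) ε (fun _ => c) = (1 / ε) * (c ^ 2 - 1) ^ 2 ∧
      (∀ u : Fin n → ℝ, (1 / (n : ℝ)) * ∑ i : Fin n, u i = c →
        glGraph n (fun _ _ => p) ε (fun _ => c) ≤ glGraph n (fun _ _ => p) ε u) ∧
      (∀ u : Fin n → ℝ, (1 / (n : ℝ)) * ∑ i : Fin n, u i = c →
        glGraph n (fun _ _ => p) ε u = glGraph n (fun _ _ => p) ε (fun _ => c) →
        u = fun _ => c)) :=
  (oversaturated_minimizers_general n hn γ hγ).imp_right fun h p ε c _ hε _ hc =>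
    h p ε c hε (sq_abs c ▸ (Real.sqrt_le_left (abs_nonneg c)).1 hc)
end
end
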